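/- Let X = {0,...,ℓ−1} be a finite alphabet and let the source produce i.i.d. digits with distribution p^so = (p^so_j) ∈ S_ℓ having all entries strictly positive; set h = −Σ_j p^so_j log p^so_j. Fix ε, η > 0 and a weight function φ : X → ℝ, and let b_n be the number of strings x ∈ X^n satisfying (1/n)·Σ_{i=0}^{n−1} φ(x_i) ≥ η and −(1/(n−1))·Σ_{i=0}^{n−2} log p^so_{x_{i+1}} ≤ h + ε. Let D = {y ∈ S_ℓ : Σ_i y_i φ(i) ≥ η and −Σ_i y_i log p^so_i ≤ h + ε}. If D has nonempty interior relative to S_ℓ, then lim_{n→∞} (1/n)·log b_n = sup{H(y) : y ∈ D}. -/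

import Mathlib

open Real Filter Finset Topology

def cnt {N ℓ : ℕ} (x : Fin N → Fin ℓ) (j : Fin ℓ) : ℕ := (univ.filter (fun i => x i = j)).card

lemma sum_cnt {N ℓ : ℕ} (x : Fin N → Fin ℓ) (f : Fin ℓ → ℝ) :
    ∑ i, f (x i) = ∑ j, (cnt x j : ℝ) * f j := by
  rw [← Finset.sum_fiberwise_of_maps_to (s := univ) (t := univ) (g := x) (fun _ _ => mem_univ _)]
  refine Finset.sum_congr rfl fun j _ => ?_
  rw [Finset.sum_congr rfl (g := fun _ => f j)]
  · simp [cnt]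
  · intro i hi
    simp at hi
    rw [hi]

lemma sum_cnt_one {N ℓ : ℕ} (x : Fin N → Fin ℓ) : ∑ j, cnt x j = N := by
  have := sum_cnt x (fun _ => 1)
  simp at this
  exact_mod_cast this.symm

lemma card_type_le {N ℓ : ℕ} (hN : 0 < N) (k : Fin ℓ → ℕ) :
    (((univ : Finset (Fin N → Fin ℓ)).filter (fun x => cnt x = k)).card : ℝ)
      ≤ Real.exp ((N:ℝ) * ∑ j, negMulLog ((k j : ℝ) / N)) := by
  have hN' : (0:ℝ) < N := by exact_mod_cast hN
  set A := (univ : Finset (Fin N → Fin ℓ)).filter (fun x => cnt x = k) with hA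
  rcases A.eq_empty_or_nonempty with h | ⟨x0, hx0⟩
  · rw [h]; simp; positivity
  have hk : ∑ j, k j = N := by
    rw [hA, mem_filter] at hx0
    rw [← hx0.2]; exact sum_cnt_one x0
  have hk' : ∑ j, (k j : ℝ) / N = 1 := by
    rw [← Finset.sum_div]
    rw [div_eq_one_iff_eq hN'.ne']
    exact_mod_cast hk
  have h1 : ∑ x : Fin N → Fin ℓ, ∏ i, ((k (x i) : ℝ) / N) = 1 := by
    rw [← Fintype.piFinset_univ, ← Finset.prod_univ_sum (fun _ => univ) (fun _ j => (k j : ℝ)/N)]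
    simp [hk']
  have h2 : ∀ x ∈ A, ∏ i, ((k (x i) : ℝ) / N) = Real.exp (-((N:ℝ) * ∑ j, negMulLog ((k j : ℝ) / N))) := by
    intro x hx
    rw [hA, mem_filter] at hx
    have hp : ∀ i, 0 < (k (x i) : ℝ) / N := by
      intro i
      have : 0 < k (x i) := by
        rw [← hx.2]
        exact Finset.card_pos.2 ⟨i, by simp⟩
      positivity
    rw [← Real.exp_log (Finset.prod_pos fun i _ => hp i), Real.log_prod (fun i _ => (hp i).ne')]
    rw [sum_cnt x (fun j => Real.log ((k j : ℝ)/N)), hx.2, Finset.mul_sum, ← Finset.sum_neg_distrib]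
    congr 1
    refine Finset.sum_congr rfl fun j _ => ?_
    rw [negMulLog]
    field_simp
  have h3 : ∑ x ∈ A, ∏ i, ((k (x i) : ℝ) / N) ≤ 1 := by
    rw [← h1]
    exact Finset.sum_le_sum_of_subset_of_nonneg (subset_univ _) (fun x _ _ => Finset.prod_nonneg fun i _ => by positivity)
  rw [Finset.sum_congr rfl h2, Finset.sum_const, nsmul_eq_mul, Real.exp_neg] at h3
  rwa [← div_eq_mul_inv, div_le_one (Real.exp_pos _)] at h3

lemma card_types {N ℓ : ℕ} (hN : 0 < N) (A : Finset (Fin N → Fin ℓ)) (B : ℝ)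
    (hB : ∀ x ∈ A, ∑ j, negMulLog ((cnt x j : ℝ) / N) ≤ B) :
    (A.card : ℝ) ≤ ((N:ℝ)+1)^ℓ * Real.exp (N * B) := by
  classical
  have h1 : A.card = ∑ k ∈ A.image cnt, (A.filter (fun x => cnt x = k)).card :=
    Finset.card_eq_sum_card_image cnt A
  have h2 : ((A.image cnt).card : ℝ) ≤ ((N:ℝ)+1)^ℓ := by
    have : A.image cnt ⊆ Fintype.piFinset (fun _ : Fin ℓ => Finset.range (N+1)) := by
      intro k hk
      obtain ⟨x, -, rfl⟩ := Finset.mem_image.1 hk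
      rw [Fintype.mem_piFinset]
      intro j
      rw [Finset.mem_range, Nat.lt_succ_iff]
      exact (Finset.card_le_univ _).trans (by simp)
    have := Finset.card_le_card this
    simp at this
    exact_mod_cast this
  rw [h1]
  push_cast
  calc _ ≤ ∑ k ∈ A.image cnt, Real.exp (N * B) := by
        refine Finset.sum_le_sum fun k hk => ?_
        obtain ⟨x, hx, rfl⟩ := Finset.mem_image.1 hk
        refine le_trans ?_ ((card_type_le hN (cnt x)).trans ?_)
        · exact_mod_cast Finset.card_le_card (Finset.filter_subset_filter _ (subset_univ _))
        · refine Real.exp_le_exp.2 (mul_le_mul_of_nonneg_left (hB x hx) (by positivity))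
    _ = (A.image cnt).card * Real.exp (N * B) := by simp
    _ ≤ _ := by gcongr

lemma exists_type {N ℓ : ℕ} (k : Fin ℓ → ℕ) (hk : ∑ j, k j = N) : ∃ x : Fin N → Fin ℓ, cnt x = k := by
  subst hk
  refine ⟨fun i => (finSigmaFinEquiv.symm i).1, ?_⟩
  funext j
  rw [cnt]
  rw [← Fintype.card_subtype]
  rw [Fintype.card_congr (β := {s : (Σ j, Fin (k j)) // s.1 = j}) (finSigmaFinEquiv.symm.subtypeEquiv (fun a => by rfl))]
  rw [Fintype.card_congr (Equiv.sigmaSubtype j)]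
  simp

lemma fact_le {N ℓ : ℕ} (x0 : Fin N → Fin ℓ) :
    N.factorial ≤ ((univ : Finset (Fin N → Fin ℓ)).filter (fun x => cnt x = cnt x0)).card * ∏ j, (cnt x0 j).factorial := by
  classical
  have h2 := DomMulAct.stabilizer_card x0
  have h3 : ∏ j, (cnt x0 j).factorial = (univ.filter (fun g : Equiv.Perm (Fin N) => x0 ∘ g = x0)).card := by
    rw [← Fintype.card_subtype, h2]
    refine Finset.prod_congr rfl fun j _ => ?_
    rw [cnt, Fintype.card_subtype]
  have h4 := Finset.card_le_mul_card_image (f := fun g : Equiv.Perm (Fin N) => x0 ∘ g) univ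
    (∏ j, (cnt x0 j).factorial) ?_
  · rw [Finset.card_univ, Fintype.card_perm, Fintype.card_fin, mul_comm] at h4
    refine h4.trans (Nat.mul_le_mul_right _ (Finset.card_le_card ?_))
    intro x hx
    obtain ⟨g, -, rfl⟩ := Finset.mem_image.1 hx
    simp only [mem_filter, mem_univ, true_and]
    funext j
    unfold cnt
    refine Finset.card_equiv g ?_
    intro i
    simp
  · intro a ha
    obtain ⟨g, -, rfl⟩ := Finset.mem_image.1 ha
    rw [h3]
    refine Finset.card_le_card_of_injOn (fun f => f * g⁻¹) ?_ ?_
    · intro f hf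
      simp at hf ⊢
      funext i
      have := congrFun hf (g.symm i)
      simpa using this
    · intro f _ f' _ h
      simpa using h

lemma log_fact_le (k : ℕ) : Real.log (k.factorial) ≤ ((k:ℝ)+1) * Real.log ((k:ℝ)+1) - k := by
  induction k with
  | zero => simp
  | succ k ih =>
    rw [Nat.factorial_succ]
    push_cast
    rw [Real.log_mul (by positivity) (by positivity)]
    have h := Real.one_sub_inv_le_log_of_pos (x := ((k:ℝ)+1+1)/((k:ℝ)+1)) (by positivity)
    rw [Real.log_div (by positivity) (by positivity)] at h
    have h2 : ((k:ℝ)+1+1) * (1 - (((k:ℝ)+1+1)/((k:ℝ)+1))⁻¹) = 1 := by field_simp; ring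
    have h3 := mul_le_mul_of_nonneg_left h (show (0:ℝ) ≤ (k:ℝ)+1+1 by positivity)
    rw [h2] at h3
    nlinarith

lemma le_log_fact (N : ℕ) (hN : 0 < N) : (N:ℝ) * Real.log N - N ≤ Real.log (N.factorial) := by
  have hN' : (0:ℝ) < N := by exact_mod_cast hN
  have h := Real.pow_div_factorial_le_exp (N:ℝ) hN'.le N
  have := Real.log_le_log (by positivity) h
  rw [Real.log_exp, Real.log_div (by positivity) (by positivity), Real.log_pow] at this
  linarith

lemma log_card_ge {N ℓ : ℕ} (hN : 0 < N) (x0 : Fin N → Fin ℓ) :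
    (N:ℝ) * (∑ j, negMulLog (((cnt x0 j : ℝ) + 1) / N)) - ℓ * Real.log N ≤
    Real.log (((univ : Finset (Fin N → Fin ℓ)).filter (fun x => cnt x = cnt x0)).card) := by
  have hN' : (0:ℝ) < N := by exact_mod_cast hN
  have hc : (0:ℝ) < ((univ : Finset (Fin N → Fin ℓ)).filter (fun x => cnt x = cnt x0)).card := by
    exact_mod_cast Finset.card_pos.2 ⟨x0, by simp⟩
  have h1 : (N.factorial : ℝ) ≤ ((univ : Finset (Fin N → Fin ℓ)).filter (fun x => cnt x = cnt x0)).card * ∏ j, ((cnt x0 j).factorial : ℝ) := by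
    exact_mod_cast fact_le x0
  have hp : ∀ j, (0:ℝ) < ((cnt x0 j).factorial : ℝ) := fun j => by positivity
  have h2 := Real.log_le_log (by positivity) h1
  rw [Real.log_mul hc.ne' (Finset.prod_pos fun j _ => hp j).ne', Real.log_prod (fun j _ => (hp j).ne')] at h2
  have h3 : ∑ j, Real.log ((cnt x0 j).factorial : ℝ) ≤ ∑ j, (((cnt x0 j:ℝ)+1) * Real.log ((cnt x0 j:ℝ)+1) - cnt x0 j) :=
    Finset.sum_le_sum fun j _ => log_fact_le _
  have hs : ∑ j, (cnt x0 j : ℝ) = N := by exact_mod_cast sum_cnt_one x0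
  rw [Finset.sum_sub_distrib, hs] at h3
  have h4 := le_log_fact N hN
  have h5 : (N:ℝ) * (∑ j, negMulLog (((cnt x0 j : ℝ) + 1) / N)) = ((N:ℝ)+ℓ) * Real.log N - ∑ j, ((cnt x0 j:ℝ)+1) * Real.log ((cnt x0 j:ℝ)+1) := by
    have : ((N:ℝ)+ℓ) = ∑ j, ((cnt x0 j : ℝ) + 1) := by
      rw [Finset.sum_add_distrib, hs]; simp
    rw [this, Finset.sum_mul, ← Finset.sum_sub_distrib, Finset.mul_sum]
    refine Finset.sum_congr rfl fun j _ => ?_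
    rw [negMulLog, Real.log_div (by positivity) (by positivity)]
    field_simp
    ring
  rw [h5]
  linarith

lemma exists_approx {ℓ : ℕ} (hℓ : 0 < ℓ) (y : Fin ℓ → ℝ) (hy : ∀ i, 0 ≤ y i) (hs : ∑ i, y i = 1) (N : ℕ) :
    ∃ k : Fin ℓ → ℕ, ∑ j, k j = N ∧ ∀ j, |(k j : ℝ) - N * y j| ≤ ℓ := by
  have hf1 : ∑ j, ⌊(N:ℝ) * y j⌋₊ ≤ N := by
    have : ((∑ j, ⌊(N:ℝ) * y j⌋₊ : ℕ):ℝ) ≤ N := by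
      push_cast
      calc _ ≤ ∑ j, (N:ℝ) * y j := Finset.sum_le_sum fun j _ => Nat.floor_le (by have := hy j; positivity)
        _ = N := by rw [← Finset.mul_sum, hs, mul_one]
    exact_mod_cast this
  have hf2 : (N:ℝ) ≤ (∑ j, (⌊(N:ℝ) * y j⌋₊:ℝ)) + (ℓ - 1 : ℝ) + 1 := by
    calc (N:ℝ) = ∑ j, (N:ℝ) * y j := by rw [← Finset.mul_sum, hs, mul_one]
      _ ≤ ∑ j, ((⌊(N:ℝ) * y j⌋₊:ℝ) + 1) := Finset.sum_le_sum fun j _ => (Nat.lt_floor_add_one _).le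
      _ = _ := by rw [Finset.sum_add_distrib]; simp; ring
  obtain ⟨d, hd⟩ := Nat.exists_eq_add_of_le hf1
  have hd' : (N:ℝ) = (∑ j, (⌊(N:ℝ) * y j⌋₊:ℝ)) + d := by exact_mod_cast hd
  have hdl : (d:ℝ) ≤ ℓ := by linarith
  have hl1 : (1:ℝ) ≤ ℓ := by exact_mod_cast hℓ
  refine ⟨fun j => ⌊(N:ℝ) * y j⌋₊ + if j = ⟨0, hℓ⟩ then d else 0, ?_, ?_⟩
  · rw [Finset.sum_add_distrib, Finset.sum_ite_eq']
    simp; omega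
  · intro j
    have a1 := Nat.floor_le (show 0 ≤ (N:ℝ) * y j by have := hy j; positivity)
    have a2 := Nat.lt_floor_add_one ((N:ℝ) * y j)
    have : (0:ℝ) ≤ d := by positivity
    rw [abs_le]
    dsimp only
    split_ifs <;> push_cast <;> constructor <;> linarith

lemma ent_conv {ℓ : ℕ} (y z : Fin ℓ → ℝ) (hy : ∀ i, 0 ≤ y i) (hz : ∀ i, 0 ≤ z i) (hzs : ∑ i, z i = 1)
    (t : ℝ) (ht0 : 0 ≤ t) (ht1 : t ≤ 1) :
    (1 - t) * ∑ i, negMulLog (y i) ≤ ∑ i, negMulLog ((1 - t) * y i + t * z i) := by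
  rw [Finset.mul_sum]
  refine Finset.sum_le_sum fun i _ => ?_
  have h := Real.concaveOn_negMulLog.2 (Set.mem_Ici.2 (hy i)) (Set.mem_Ici.2 (hz i)) (show (0:ℝ) ≤ 1 - t by linarith) ht0 (by ring)
  simp only [smul_eq_mul] at h
  have hz1 : z i ≤ 1 := by rw [← hzs]; exact Finset.single_le_sum (fun j _ => hz j) (mem_univ i)
  have := mul_nonneg ht0 (Real.negMulLog_nonneg (hz i) hz1)
  linarith

set_option maxHeartbeats 2000000 in
theorem stmt2
    (ℓ : ℕ) (hℓ : 0 < ℓ)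
    -- IID source distribution, strictly positive
    (p : Fin ℓ → ℝ)
    (hpPos : ∀ j, 0 < p j)
    (hpSum : ∑ j, p j = 1)
    -- entropy rate of the source
    (h : ℝ)
    (hdef : h = -∑ j, p j * Real.log (p j))
    (ε η : ℝ) (hε : 0 < ε) (hη : 0 < η)
    -- one-digit weight function
    (φ : Fin ℓ → ℝ)
    -- the number of selected strings of length n+1
    (bn : ℕ → ℕ)
    (hbn : ∀ n, bn n = Set.ncard {x : Fin (n+1) → Fin ℓ |
        η ≤ ((n : ℝ)+1)⁻¹ * ∑ i, φ (x i) ∧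
        -(n : ℝ)⁻¹ * ∑ l : Fin n, Real.log (p (x l.succ)) ≤ h + ε})
    -- the simplex S_ℓ
    (S1 : Set (Fin ℓ → ℝ))
    (hS1 : S1 = {y | (∀ i, 0 ≤ y i) ∧ ∑ i, y i = 1})
    -- the polyhedron D ⊆ S_ℓ
    (D : Set (Fin ℓ → ℝ))
    (hD : D = {y ∈ S1 | η ≤ ∑ i, y i * φ i ∧ -∑ i, y i * Real.log (p i) ≤ h + ε})
    -- D has nonempty interior relative to S_ℓ
    (hInt : (interior {y : ↥S1 | (y : Fin ℓ → ℝ) ∈ D}).Nonempty)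
    -- the entropy function H
    (H : (Fin ℓ → ℝ) → ℝ)
    (hH : ∀ y, H y = -∑ i, y i * Real.log (y i)) :
    Tendsto (fun n : ℕ => ((n : ℝ)+1)⁻¹ * Real.log (bn n))
      atTop (𝓝 (sSup {r | ∃ y ∈ D, r = H y})) := by
  classical
  have hHe : ∀ y, H y = ∑ i, negMulLog (y i) := by
    intro y
    rw [hH, ← Finset.sum_neg_distrib]
    exact Finset.sum_congr rfl fun i _ => by rw [negMulLog]; ring
  have hmem : ∀ y, y ∈ D ↔ ((∀ i, 0 ≤ y i) ∧ ∑ i, y i = 1) ∧ η ≤ ∑ i, y i * φ i ∧ -∑ i, y i * Real.log (p i) ≤ h + ε := by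
    intro y; rw [hD, hS1]; rfl
  have hle1 : ∀ y : Fin ℓ → ℝ, (∀ i, 0 ≤ y i) → ∑ i, y i = 1 → ∀ i, y i ≤ 1 := by
    intro y hy hs i
    rw [← hs]; exact Finset.single_le_sum (fun j _ => hy j) (mem_univ i)
  have hlog : ∀ j, Real.log (p j) ≤ 0 := fun j =>
    Real.log_nonpos (hpPos j).le (hle1 p (fun i => (hpPos i).le) hpSum j)
  have hh0 : 0 ≤ h := by
    rw [hdef, ← Finset.sum_neg_distrib]
    refine Finset.sum_nonneg fun j _ => ?_
    have := mul_nonneg (hpPos j).le (neg_nonneg.2 (hlog j))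
    linarith
  obtain ⟨C, hC⟩ : ∃ C, C = ∑ j, -Real.log (p j) := ⟨_, rfl⟩
  have hC0 : 0 ≤ C := by rw [hC]; exact Finset.sum_nonneg fun j _ => neg_nonneg.2 (hlog j)
  have hCj : ∀ j, -Real.log (p j) ≤ C := fun j => by
    rw [hC]; exact Finset.single_le_sum (f := fun j => -Real.log (p j)) (fun j _ => neg_nonneg.2 (hlog j)) (mem_univ j)
  have lin : ∀ (f y z : Fin ℓ → ℝ) (t : ℝ), ∑ i, ((1-t) * y i + t * z i) * f i = (1-t) * ∑ i, y i * f i + t * ∑ i, z i * f i := by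
    intro f y z t
    rw [Finset.mul_sum, Finset.mul_sum, ← Finset.sum_add_distrib]
    exact Finset.sum_congr rfl fun i _ => by ring
  have lin1 : ∀ (y z : Fin ℓ → ℝ) (t : ℝ), ∑ i, y i = 1 → ∑ i, z i = 1 → ∑ i, ((1-t) * y i + t * z i) = 1 := by
    intro y z t hy hz
    have := lin (fun _ => 1) y z t
    simp only [mul_one] at this
    rw [this, hy, hz]; ring
  -- Slater point
  obtain ⟨z, ρ, hρ, hzpos, hzsum, hzst, hzD, hzball⟩ : ∃ (z : Fin ℓ → ℝ) (ρ : ℝ), 0 < ρ ∧ (∀ i, 0 < z i) ∧ ∑ i, z i = 1 ∧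
      -∑ i, z i * Real.log (p i) < h + ε ∧ z ∈ D ∧
      ∀ q : Fin ℓ → ℝ, ∑ i, q i = 1 → (∀ i, |q i - z i| < ρ) → q ∈ D := by
    obtain ⟨z0, hz0⟩ := hInt
    rw [mem_interior_iff_mem_nhds, Metric.mem_nhds_iff] at hz0
    obtain ⟨r, hr, hball⟩ := hz0
    have hb : ∀ q : Fin ℓ → ℝ, (∀ i, 0 ≤ q i) → ∑ i, q i = 1 → (∀ i, |q i - (z0 : Fin ℓ → ℝ) i| < r) → q ∈ D := by
      intro q hq hqs hqd
      have hqS : q ∈ S1 := by rw [hS1]; exact ⟨hq, hqs⟩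
      have : (⟨q, hqS⟩ : S1) ∈ Metric.ball z0 r := by
        rw [Metric.mem_ball, Subtype.dist_eq, dist_pi_lt_iff hr]
        intro i
        rw [Real.dist_eq]; exact hqd i
      exact hball this
    obtain ⟨z0, hz0S⟩ := z0
    have hz0S' := hz0S
    rw [hS1] at hz0S'
    obtain ⟨hz0n, hz0s⟩ := hz0S'
    simp only at hb
    have hz0D := hb z0 hz0n hz0s (fun i => by simpa using hr)
    set s := min (r/4) (1/2) with hs
    have hs0 : 0 < s := lt_min (by linarith) (by norm_num)
    have hs1 : s ≤ 1/2 := min_le_right _ _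
    have hs2 : s ≤ r/4 := min_le_left _ _
    obtain ⟨i0, hi0⟩ : ∃ i0, ∀ i, p i0 ≤ p i := by
      have : Nonempty (Fin ℓ) := ⟨⟨0, hℓ⟩⟩
      exact Finite.exists_min p
    have hzp : ∀ i, s * p i ≤ (1 - s) * z0 i + s * p i := fun i => by
      have := mul_nonneg (show 0 ≤ 1 - s by linarith) (hz0n i)
      linarith
    have hq : ∀ q : Fin ℓ → ℝ, ∑ i, q i = 1 → (∀ i, |q i - ((1 - s) * z0 i + s * p i)| < min (r/2) (s * p i0)) → q ∈ D := by
      intro q hqs hqd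
      refine hb q ?_ hqs ?_
      · intro i
        have h1 := (hqd i).trans_le (min_le_right _ _)
        have h2 := hzp i
        have h3 := mul_le_mul_of_nonneg_left (hi0 i) hs0.le
        rw [abs_lt] at h1
        linarith
      · intro i
        have h1 := (hqd i).trans_le (min_le_left _ _)
        have a1 := hz0n i
        have a2 := hle1 z0 hz0n hz0s i
        have a3 := (hpPos i).le
        have a4 := hle1 p (fun i => (hpPos i).le) hpSum i
        rw [abs_lt] at h1 ⊢
        constructor <;> nlinarith
    have hρ : 0 < min (r/2) (s * p i0) := lt_min (by linarith) (mul_pos hs0 (hpPos _))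
    refine ⟨fun i => (1 - s) * z0 i + s * p i, min (r/2) (s * p i0), hρ, ?_, ?_, ?_, ?_, hq⟩
    · intro i
      exact (mul_pos hs0 (hpPos i)).trans_le (hzp i)
    · exact lin1 _ _ _ hz0s hpSum
    · rw [lin (fun i => Real.log (p i))]
      have h1 := ((hmem _).1 hz0D).2.2
      nlinarith
    · exact hq _ (lin1 _ _ _ hz0s hpSum) (fun i => by simpa using hρ)
  have hconv : ∀ y ∈ D, ∀ z ∈ D, ∀ t : ℝ, 0 ≤ t → t ≤ 1 → (fun i => (1-t) * y i + t * z i) ∈ D := by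
    intro y hy z hz t ht0 ht1
    rw [hmem] at hy hz ⊢
    obtain ⟨⟨y1, y2⟩, y3, y4⟩ := hy
    obtain ⟨⟨z1, z2⟩, z3, z4⟩ := hz
    refine ⟨⟨fun i => ?_, lin1 _ _ _ y2 z2⟩, ?_, ?_⟩
    · exact add_nonneg (mul_nonneg (by linarith) (y1 i)) (mul_nonneg ht0 (z1 i))
    · rw [lin]; nlinarith
    · rw [lin (fun i => Real.log (p i))]; nlinarith
  have hHnn : ∀ y ∈ D, 0 ≤ H y := by
    intro y hy
    rw [hHe]
    have hy' := ((hmem _).1 hy).1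
    exact Finset.sum_nonneg fun i _ => Real.negMulLog_nonneg (hy'.1 i) (hle1 y hy'.1 hy'.2 i)
  have hbdd : BddAbove {r | ∃ y ∈ D, r = H y} := by
    refine ⟨ℓ, ?_⟩
    rintro r ⟨y, hy, rfl⟩
    rw [hHe]
    have hy' := ((hmem _).1 hy).1
    calc _ ≤ ∑ i : Fin ℓ, (1:ℝ) := by
          refine Finset.sum_le_sum fun i _ => ?_
          have := Real.negMulLog_le_one_sub_self (hy'.1 i)
          have := hy'.1 i
          linarith
      _ = ℓ := by simp
  set M := sSup {r | ∃ y ∈ D, r = H y} with hM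
  have hleM : ∀ y ∈ D, H y ≤ M := fun y hy => le_csSup hbdd ⟨y, hy, rfl⟩
  have hM0 : 0 ≤ M := (hHnn z hzD).trans (hleM z hzD)
  have hgood : ∀ n, bn n = (univ.filter (fun x : Fin (n+1) → Fin ℓ => η ≤ ((n : ℝ)+1)⁻¹ * ∑ i, φ (x i) ∧
        -(n : ℝ)⁻¹ * ∑ l : Fin n, Real.log (p (x l.succ)) ≤ h + ε)).card := by
    intro n
    rw [hbn, ← Set.ncard_coe_finset]
    congr 1
    ext x; simp
  have htail : ∀ n (x : Fin (n+1) → Fin ℓ), ∑ l : Fin n, Real.log (p (x l.succ)) = ∑ i, Real.log (p (x i)) - Real.log (p (x 0)) := by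
    intro n x
    rw [Fin.sum_univ_succ (fun i => Real.log (p (x i)))]; ring
  have hsum : ∀ n (x : Fin (n+1) → Fin ℓ) (f : Fin ℓ → ℝ), ∑ j, ((cnt x j : ℝ) / ((n+1:ℕ):ℝ)) * f j = ((n:ℝ)+1)⁻¹ * ∑ i, f (x i) := by
    intro n x f
    rw [sum_cnt, Finset.mul_sum]
    refine Finset.sum_congr rfl fun j _ => ?_
    push_cast; field_simp
  have hone : ∀ n (x : Fin (n+1) → Fin ℓ), ∑ j, ((cnt x j : ℝ) / ((n+1:ℕ):ℝ)) = 1 := by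
    intro n x
    have := hsum n x (fun _ => 1)
    simp only [mul_one] at this
    rw [this]; simp; field_simp
  have hdiv : ∀ c : ℝ, Tendsto (fun n : ℕ => c / ((n:ℝ)+1)) atTop (𝓝 0) := fun c =>
    (tendsto_const_nhds (x := c)).div_atTop (tendsto_atTop_add_const_right _ _ tendsto_natCast_atTop_atTop)
  rw [tendsto_order]
  constructor
  · intro a ha
    obtain ⟨_, ⟨y, hy, rfl⟩, hay⟩ := exists_lt_of_lt_csSup (show {r | ∃ y ∈ D, r = H y}.Nonempty from ⟨H z, z, hzD, rfl⟩) ha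
    obtain ⟨t, ht0, ht1, hta⟩ : ∃ t : ℝ, 0 < t ∧ t < 1 ∧ a < (1 - t) * H y := by
      have hc : Tendsto (fun t : ℝ => (1 - t) * H y) (𝓝[>] 0) (𝓝 (H y)) := by
        have : Continuous (fun t : ℝ => (1 - t) * H y) := by fun_prop
        have := this.tendsto 0
        simp only [sub_zero, one_mul] at this
        exact this.mono_left nhdsWithin_le_nhds
      have h1 := hc.eventually (lt_mem_nhds hay)
      have h2 : ∀ᶠ t : ℝ in 𝓝[>] 0, t < 1 := nhdsWithin_le_nhds (gt_mem_nhds one_pos)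
      have h3 : ∀ᶠ t : ℝ in 𝓝[>] 0, 0 < t := self_mem_nhdsWithin
      obtain ⟨t, h1, h2, h3⟩ := (h1.and (h2.and h3)).exists
      exact ⟨t, h3, h2, h1⟩
    obtain ⟨w, hw⟩ : ∃ w : Fin ℓ → ℝ, w = fun i => (1-t) * y i + t * z i := ⟨_, rfl⟩
    have hwD : w ∈ D := by rw [hw]; exact hconv y hy z hzD t ht0.le ht1.le
    have hw' := (hmem _).1 hwD
    have hy' := (hmem _).1 hy
    have haw : a < ∑ i, negMulLog (w i) := by
      refine hta.trans_le ?_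
      rw [hHe, hw]
      exact ent_conv y z hy'.1.1 (fun i => (hzpos i).le) hzsum t ht0.le ht1.le
    obtain ⟨σ, hσ⟩ : ∃ σ, σ = h + ε + ∑ i, w i * Real.log (p i) := ⟨_, rfl⟩
    have hσ0 : 0 < σ := by
      have := lin (fun i => Real.log (p i)) y z t
      rw [hσ, hw, this]
      have := hy'.2.2
      nlinarith
    choose k hksum hkapp using fun n : ℕ => exists_approx hℓ w hw'.1.1 hw'.1.2 (n+1)
    choose x0 hx0 using fun n => exists_type (k n) (hksum n)
    have happ : ∀ n j, |(k n j : ℝ) / ((n+1:ℕ):ℝ) - w j| ≤ ℓ / ((n:ℝ)+1) := by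
      intro n j
      have h1 := hkapp n j
      have hN : (0:ℝ) < (n:ℝ)+1 := by positivity
      have : (k n j : ℝ) / ((n+1:ℕ):ℝ) - w j = ((k n j : ℝ) - ((n+1:ℕ):ℝ) * w j) / ((n:ℝ)+1) := by
        push_cast; field_simp
      rw [this, abs_div, abs_of_pos hN]
      gcongr
    have hlim1 : ∀ j, Tendsto (fun n : ℕ => ((k n j : ℝ) + 1) / ((n+1:ℕ):ℝ)) atTop (𝓝 (w j)) := by
      intro j
      have h1 : Tendsto (fun n : ℕ => (k n j : ℝ) / ((n+1:ℕ):ℝ) - w j) atTop (𝓝 0) :=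
        squeeze_zero_norm (fun n => by rw [Real.norm_eq_abs]; exact happ n j) (hdiv ℓ)
      have h2 := (h1.add (hdiv 1)).add_const (w j)
      simp only [zero_add, add_zero] at h2
      refine h2.congr fun n => ?_
      push_cast; ring
    have hlogN : Tendsto (fun n : ℕ => (ℓ:ℝ) * (Real.log ((n+1:ℕ):ℝ) / ((n+1:ℕ):ℝ))) atTop (𝓝 0) := by
      have h1 : Tendsto (fun x : ℝ => Real.log x / x) atTop (𝓝 0) := Real.isLittleO_log_id_atTop.tendsto_div_nhds_zero
      have h2 := (h1.comp (tendsto_natCast_atTop_atTop (R := ℝ))).comp (tendsto_add_atTop_nat 1)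
      simpa using h2.const_mul (ℓ:ℝ)
    have hlim2 : Tendsto (fun n : ℕ => (∑ j, negMulLog (((k n j : ℝ) + 1) / ((n+1:ℕ):ℝ))) - (ℓ:ℝ) * (Real.log ((n+1:ℕ):ℝ) / ((n+1:ℕ):ℝ)))
        atTop (𝓝 (∑ j, negMulLog (w j))) := by
      have h1 := tendsto_finsetSum (s := (univ : Finset (Fin ℓ))) (fun j _ => (Real.continuous_negMulLog.tendsto (w j)).comp (hlim1 j))
      simpa using h1.sub hlogN
    filter_upwards [hlim2.eventually (lt_mem_nhds haw), (hdiv ℓ).eventually (gt_mem_nhds (mul_pos ht0 hρ)),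
      (hdiv (h + ε + ℓ * C)).eventually (gt_mem_nhds hσ0), eventually_gt_atTop 0] with n e1 e2 e3 e4
    refine e1.trans_le ?_
    have hN : (0:ℝ) < (n:ℝ)+1 := by positivity
    have hn : (0:ℝ) < n := by exact_mod_cast e4
    have hL := log_card_ge (Nat.succ_pos n) (x0 n)
    rw [hx0 n] at hL
    -- the type lies in D
    set q : Fin ℓ → ℝ := fun j => (k n j : ℝ) / ((n+1:ℕ):ℝ) with hq
    have hqs : ∑ j, q j = 1 := by rw [hq, ← hx0 n]; exact hone n (x0 n)
    have hqD : q ∈ D := by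
      have hz' : (fun i => z i + (q i - w i) / t) ∈ D := by
        refine hzball _ ?_ ?_
        · rw [Finset.sum_add_distrib, ← Finset.sum_div, Finset.sum_sub_distrib, hzsum, hqs, hw'.1.2]; simp
        · intro i
          have h1 := (happ n i).trans_lt e2
          rw [add_sub_cancel_left, abs_div, abs_of_pos ht0, div_lt_iff₀ ht0]
          linarith
      have := hconv y hy _ hz' t ht0.le ht1.le
      convert this using 2 with i
      rw [hw]; field_simp; ring
    have hqst : -∑ i, q i * Real.log (p i) ≤ h + ε - σ + ℓ / ((n:ℝ)+1) * C := by
      have h1 : -∑ i, q i * Real.log (p i) = -∑ i, w i * Real.log (p i) + ∑ i, (q i - w i) * (-Real.log (p i)) := by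
        rw [← Finset.sum_neg_distrib, ← Finset.sum_neg_distrib, ← Finset.sum_add_distrib]
        exact Finset.sum_congr rfl fun i _ => by ring
      have h2 : ∑ i, (q i - w i) * (-Real.log (p i)) ≤ ℓ / ((n:ℝ)+1) * C := by
        rw [hC, Finset.mul_sum]
        refine Finset.sum_le_sum fun i _ => mul_le_mul_of_nonneg_right ((le_abs_self _).trans (happ n i)) (neg_nonneg.2 (hlog i))
      rw [h1]; linarith
    have hcard : (univ.filter (fun x : Fin (n+1) → Fin ℓ => cnt x = k n)).card ≤ bn n := by
      rw [hgood]
      refine Finset.card_le_card fun x hx => ?_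
      simp only [mem_filter, mem_univ, true_and] at hx ⊢
      have hqx : ∀ f : Fin ℓ → ℝ, ∑ j, q j * f j = ((n:ℝ)+1)⁻¹ * ∑ i, f (x i) := by
        intro f; rw [← hsum n x f, hx]
      refine ⟨?_, ?_⟩
      · rw [← hqx φ]; exact ((hmem _).1 hqD).2.1
      · rw [htail]
        rw [hqx (fun j => Real.log (p j))] at hqst
        set T := ∑ i, Real.log (p (x i)) with hT
        have h1 := hlog (x 0)
        rw [div_lt_iff₀ hN] at e3
        have h2 : -T ≤ (h + ε - σ) * ((n:ℝ)+1) + ℓ * C := by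
          have := mul_le_mul_of_nonneg_right hqst hN.le
          field_simp at this
          linarith
        have h3 : -(T - Real.log (p (x 0))) ≤ (h + ε) * n := by nlinarith
        rw [neg_mul, ← mul_neg, inv_mul_le_iff₀ hn]
        linarith
    have hcpos : 0 < (univ.filter (fun x : Fin (n+1) → Fin ℓ => cnt x = k n)).card :=
      Finset.card_pos.2 ⟨x0 n, by simp [hx0 n]⟩
    have hfin : Real.log ((univ.filter (fun x : Fin (n+1) → Fin ℓ => cnt x = k n)).card : ℝ) ≤ Real.log (bn n) :=
      Real.log_le_log (by exact_mod_cast hcpos) (by exact_mod_cast hcard)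
    rw [inv_mul_eq_div, le_div_iff₀ hN]
    refine le_trans (le_of_eq ?_) (hL.trans hfin)
    simp only [Nat.succ_eq_add_one]
    push_cast
    field_simp
  · intro a ha
    obtain ⟨σ, hσ⟩ : ∃ σ, σ = h + ε + ∑ i, z i * Real.log (p i) := ⟨_, rfl⟩
    have hσ0 : 0 < σ := by rw [hσ]; linarith
    have hlim : Tendsto (fun n : ℕ => (ℓ:ℝ) * (Real.log ((n:ℝ)+1+1) / ((n:ℝ)+1)) + M * (1 + C / ((n:ℝ)+1) / σ)) atTop (𝓝 M) := by
      have h1 : Tendsto (fun x : ℝ => Real.log x / x) atTop (𝓝 0) := Real.isLittleO_log_id_atTop.tendsto_div_nhds_zero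
      have h2 := (h1.comp (tendsto_natCast_atTop_atTop (R := ℝ))).comp (tendsto_add_atTop_nat 2)
      have h3 : Tendsto (fun n : ℕ => (ℓ:ℝ) * ((Real.log ((n+2:ℕ):ℝ) / ((n+2:ℕ):ℝ)) * (1 + 1 / ((n:ℝ)+1)))) atTop (𝓝 0) := by
        simpa using (h2.mul ((hdiv 1).const_add 1)).const_mul (ℓ:ℝ)
      have h4 : Tendsto (fun n : ℕ => M * (1 + C / ((n:ℝ)+1) / σ)) atTop (𝓝 M) := by
        simpa using (((hdiv C).div_const σ).const_add 1).const_mul M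
      have h5 := h3.add h4
      rw [zero_add] at h5
      refine h5.congr fun n => ?_
      have e : ((n+2:ℕ):ℝ) = (n:ℝ)+1+1 := by push_cast; ring
      rw [e]
      congr 2
      field_simp
    filter_upwards [hlim.eventually (gt_mem_nhds ha), eventually_gt_atTop 0] with n e1 e4
    refine lt_of_le_of_lt ?_ e1
    have hN : (0:ℝ) < (n:ℝ)+1 := by positivity
    have hn : (0:ℝ) < n := by exact_mod_cast e4
    obtain ⟨B, hB⟩ : ∃ B, B = M * (1 + C / ((n:ℝ)+1) / σ) := ⟨_, rfl⟩
    have hB0 : 0 ≤ B := by rw [hB]; positivity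
    have hcard := card_types (Nat.succ_pos n) (univ.filter (fun x : Fin (n+1) → Fin ℓ => η ≤ ((n : ℝ)+1)⁻¹ * ∑ i, φ (x i) ∧
        -(n : ℝ)⁻¹ * ∑ l : Fin n, Real.log (p (x l.succ)) ≤ h + ε)) B ?_
    · rw [← hgood] at hcard
      rw [← hB, inv_mul_eq_div, div_le_iff₀ hN]
      have h0 : (ℓ:ℝ) * (Real.log ((n:ℝ)+1+1) / ((n:ℝ)+1)) * ((n:ℝ)+1) = ℓ * Real.log ((n:ℝ)+1+1) := by field_simp
      rw [add_mul, h0]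
      rcases Nat.eq_zero_or_pos (bn n) with hz | hz
      · rw [hz]
        simp only [Nat.cast_zero, Real.log_zero]
        have : 0 ≤ Real.log ((n:ℝ)+1+1) := Real.log_nonneg (by linarith)
        positivity
      · have := Real.log_le_log (by exact_mod_cast hz) hcard
        rw [Real.log_mul (by positivity) (by positivity), Real.log_exp, Real.log_pow] at this
        simp only [Nat.succ_eq_add_one] at this
        push_cast at this
        linarith
    · intro x hx
      simp only [mem_filter, mem_univ, true_and] at hx
      obtain ⟨hx1, hx2⟩ := hx
      rw [htail] at hx2
      simp only [Nat.succ_eq_add_one]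
      rw [← hsum] at hx1
      have hs2 := hsum n x (fun j => Real.log (p j))
      set q : Fin ℓ → ℝ := fun j => (cnt x j : ℝ) / ((n+1:ℕ):ℝ) with hq
      have hqn : ∀ j, 0 ≤ q j := fun j => by rw [hq]; positivity
      have hqs : ∑ j, q j = 1 := hone n x
      obtain ⟨δ, hδ⟩ : ∃ δ, δ = C / ((n:ℝ)+1) := ⟨_, rfl⟩
      have hδ0 : 0 ≤ δ := by rw [hδ]; positivity
      have hq2 : -∑ j, q j * Real.log (p j) ≤ h + ε + δ := by
        have e : ∑ j, q j * Real.log (p j) = ((n:ℝ)+1)⁻¹ * ∑ i, Real.log (p (x i)) := hs2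
        rw [e]
        have h1 := hCj (x 0)
        rw [neg_mul, ← mul_neg, inv_mul_le_iff₀ hn] at hx2
        have h2 : ((n:ℝ)+1) * (h + ε + δ) = ((n:ℝ)+1) * (h+ε) + C := by rw [hδ]; field_simp
        rw [← mul_neg, inv_mul_le_iff₀ hN, h2]
        nlinarith
      obtain ⟨t, ht⟩ : ∃ t, t = δ / (δ + σ) := ⟨_, rfl⟩
      have ht0 : 0 ≤ t := by rw [ht]; positivity
      have ht1' : 1 - t = σ / (δ + σ) := by rw [ht]; field_simp; ring
      have ht1 : 0 < 1 - t := by rw [ht1']; positivity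
      have hmix : (fun i => (1-t) * q i + t * z i) ∈ D := by
        have hz' := (hmem _).1 hzD
        rw [hmem]
        refine ⟨⟨fun i => ?_, lin1 _ _ _ hqs hzsum⟩, ?_, ?_⟩
        · exact add_nonneg (mul_nonneg ht1.le (hqn i)) (mul_nonneg ht0 (hzpos i).le)
        · rw [lin]
          have := hz'.2.1
          have hx1' : η ≤ ∑ j, q j * φ j := hx1
          nlinarith
        · rw [lin (fun i => Real.log (p i))]
          have h1 : (1 - t) * δ = t * σ := by rw [ht1', ht]; ring
          have h2 := mul_le_mul_of_nonneg_left hq2 ht1.le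
          have h3 : ∑ i, z i * Real.log (p i) = σ - (h + ε) := by rw [hσ]; ring
          rw [h3]
          nlinarith
      have h1 := hleM _ hmix
      rw [hHe] at h1
      have h2 := (ent_conv q z hqn (fun i => (hzpos i).le) hzsum t ht0 (by linarith)).trans h1
      have h3 : B * (1 - t) = M := by
        rw [hB, ← hδ, ht1']; field_simp; ring
      have h4 : (1 - t) * ∑ i, negMulLog (q i) ≤ (1 - t) * B := by linarith
      exact le_of_mul_le_mul_left h4 ht1
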